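/- (Vanishing of the energy of the ground state in the L²-critical case) Let d ≥ 1 and p = 1 + 4/d. Let Q : ℝ^d → ℝ be twice continuously differentiable, satisfy the elliptic equation ΔQ − Q + |Q|^{p−1}Q = 0 on ℝ^d, and satisfy the decay bounds |Q(x)| + |∇Q(x)| + |∇²Q(x)| ≤ C e^{−δ|x|} for all x ∈ ℝ^d (with constants C, δ > 0). Then E(Q) = 0, where E(f) := (1/2) ∫_{ℝ^d} |∇f|² dx − (1/(p+1)) ∫_{ℝ^d} |f|^{p+1} dx. -/

import Mathlib

/-!
The proof combines the two classical identities for `Q` (testing the equation against `Q`, and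
the Pohozaev identity obtained by testing against `x · ∇Q`) into a single divergence identity.
With `H = |∇Q|²/2 + Q²/2 - |Q|^{p+1}/(p+1)`, the vector field

  `W = (x · ∇Q) ∇Q - H x + (d/2) Q ∇Q`

satisfies, by the equation and the symmetry of the Hessian,

  `div W = |∇Q|² - d (1/2 - 1/(p+1)) |Q|^{p+1} = |∇Q|² - (2/(p+1)) |Q|^{p+1}`,

where the last step is exactly `p = 1 + 4/d`. Every component of `W` and every `∂ᵢWᵢ` is a
polynomial in the coordinates and in exponentially decaying functions, without a term free of the
latter, so it is integrable (`ExpDecay` records the closure properties used); hence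
`∫ ∂ᵢWᵢ = 0` for every `i` (`integral_lineDeriv_eq_zero`), and summing over `i` gives
`∫ |∇Q|² = (2/(p+1)) ∫ |Q|^{p+1}`.
-/

open MeasureTheory Real

/-! ### Exponentially decaying functions -/

/-- A continuous function bounded by `K e^{-ε|x|}` for some `K` and some `ε > 0`. -/
def ExpDecay {d : ℕ} (f : EuclideanSpace ℝ (Fin d) → ℝ) : Prop :=
  Continuous f ∧ ∃ K ε : ℝ, 0 ≤ K ∧ 0 < ε ∧ ∀ x, |f x| ≤ K * exp (-ε * ‖x‖)

namespace ExpDecay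

variable {d : ℕ} {f g : EuclideanSpace ℝ (Fin d) → ℝ}

lemma add (hf : ExpDecay f) (hg : ExpDecay g) : ExpDecay (fun x => f x + g x) := by
  obtain ⟨cf, K, ε, hK, hε, h⟩ := hf
  obtain ⟨cg, L, η, hL, hη, k⟩ := hg
  refine ⟨cf.add cg, K + L, min ε η, by positivity, lt_min hε hη, fun x => ?_⟩
  have h1 : exp (-ε * ‖x‖) ≤ exp (-(min ε η) * ‖x‖) := by
    apply exp_le_exp.2
    nlinarith [min_le_left ε η, norm_nonneg x]
  have h2 : exp (-η * ‖x‖) ≤ exp (-(min ε η) * ‖x‖) := by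
    apply exp_le_exp.2
    nlinarith [min_le_right ε η, norm_nonneg x]
  calc |f x + g x| ≤ |f x| + |g x| := abs_add_le _ _
    _ ≤ K * exp (-ε * ‖x‖) + L * exp (-η * ‖x‖) := add_le_add (h x) (k x)
    _ ≤ K * exp (-(min ε η) * ‖x‖) + L * exp (-(min ε η) * ‖x‖) := by gcongr
    _ = _ := by ring

lemma mul (hf : ExpDecay f) (hg : ExpDecay g) : ExpDecay (fun x => f x * g x) := by
  obtain ⟨cf, K, ε, hK, hε, h⟩ := hf
  obtain ⟨cg, L, η, hL, hη, k⟩ := hg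
  refine ⟨cf.mul cg, K * L, ε + η, by positivity, by positivity, fun x => ?_⟩
  rw [abs_mul]
  calc |f x| * |g x| ≤ (K * exp (-ε * ‖x‖)) * (L * exp (-η * ‖x‖)) := by
        gcongr
        · exact h x
        · exact k x
    _ = K * L * (exp (-ε * ‖x‖) * exp (-η * ‖x‖)) := by ring
    _ = _ := by rw [← exp_add]; ring_nf

lemma const_mul (hf : ExpDecay f) (c : ℝ) : ExpDecay (fun x => c * f x) := by
  obtain ⟨cf, K, ε, hK, hε, h⟩ := hf
  refine ⟨continuous_const.mul cf, |c| * K, ε, by positivity, hε, fun x => ?_⟩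
  rw [abs_mul, mul_assoc]
  gcongr
  exact h x

lemma sub (hf : ExpDecay f) (hg : ExpDecay g) : ExpDecay (fun x => f x - g x) := by
  simpa [sub_eq_add_neg] using hf.add (hg.const_mul (-1))

lemma sum {ι : Type*} (s : Finset ι) {F : ι → EuclideanSpace ℝ (Fin d) → ℝ}
    (hF : ∀ i, ExpDecay (F i)) : ExpDecay (fun x => ∑ i ∈ s, F i x) := by
  classical
  induction s using Finset.induction_on with
  | empty => exact ⟨by simpa using continuous_const, 0, 1, le_rfl, one_pos, by simp⟩
  | insert a s ha ih => simpa [Finset.sum_insert ha] using (hF a).add ih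

/-- Multiplication by a coordinate costs half of the exponential rate. -/
lemma coord_mul (hf : ExpDecay f) (i : Fin d) : ExpDecay (fun x => x i * f x) := by
  obtain ⟨cf, K, ε, hK, hε, h⟩ := hf
  refine ⟨(by fun_prop : Continuous fun x : EuclideanSpace ℝ (Fin d) => x i).mul cf,
    2 / ε * K, ε / 2, by positivity, by positivity, fun x => ?_⟩
  have hx : |x i| ≤ 2 / ε * exp (ε / 2 * ‖x‖) := by
    have h1 : |x i| ≤ ‖x‖ := by simpa using PiLp.norm_apply_le x i
    have h2 := add_one_le_exp (ε / 2 * ‖x‖)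
    calc |x i| ≤ ‖x‖ := h1
      _ = 2 / ε * (ε / 2 * ‖x‖) := by field_simp
      _ ≤ _ := by gcongr; linarith
  rw [abs_mul]
  calc |x i| * |f x| ≤ (2 / ε * exp (ε / 2 * ‖x‖)) * (K * exp (-ε * ‖x‖)) := by
        gcongr
        exact h x
    _ = 2 / ε * K * (exp (ε / 2 * ‖x‖) * exp (-ε * ‖x‖)) := by ring
    _ = _ := by rw [← exp_add]; ring_nf

lemma abs_rpow (hf : ExpDecay f) {s : ℝ} (hs : 0 < s) : ExpDecay (fun x => |f x| ^ s) := by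
  obtain ⟨cf, K, ε, hK, hε, h⟩ := hf
  refine ⟨cf.abs.rpow_const fun _ => Or.inr hs.le, K ^ s, ε * s, by positivity, by positivity,
    fun x => ?_⟩
  rw [abs_of_nonneg (by positivity)]
  calc |f x| ^ s ≤ (K * exp (-ε * ‖x‖)) ^ s := by gcongr; exact h x
    _ = _ := by
      rw [mul_rpow hK (exp_pos _).le, ← exp_mul]
      ring_nf

lemma integrable (hf : ExpDecay f) : Integrable f := by
  obtain ⟨cf, K, ε, hK, hε, h⟩ := hf
  have hI : Integrable (fun x : EuclideanSpace ℝ (Fin d) => (1 + ‖x‖) ^ (-((d : ℝ) + 1))) :=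
    integrable_one_add_norm (by simp)
  -- `(1 + r) ^ n ≤ c e^{ε r}` with `n = d + 1` and `c = n! e^ε / ε ^ n`
  refine (hI.const_mul (K * ((d + 1).factorial * exp ε / ε ^ (d + 1)))).mono'
    cf.aestronglyMeasurable (Filter.Eventually.of_forall fun x => ?_)
  have hx : 0 < 1 + ‖x‖ := by positivity
  have h1 := pow_div_factorial_le_exp (ε * (1 + ‖x‖)) (by positivity) (d + 1)
  rw [norm_eq_abs, rpow_neg hx.le, mul_assoc]
  refine (h x).trans (mul_le_mul_of_nonneg_left ?_ hK)
  have h2 : (1 + ‖x‖) ^ ((d : ℝ) + 1) = (1 + ‖x‖) ^ (d + 1) := by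
    rw [← rpow_natCast]; push_cast; rfl
  rw [h2, ← div_eq_mul_inv, le_div_iff₀ (by positivity), le_div_iff₀ (by positivity)]
  rw [div_le_iff₀ (by positivity), mul_pow, mul_add, exp_add, mul_one] at h1
  calc exp (-ε * ‖x‖) * (1 + ‖x‖) ^ (d + 1) * ε ^ (d + 1)
      = exp (-ε * ‖x‖) * (ε ^ (d + 1) * (1 + ‖x‖) ^ (d + 1)) := by ring
    _ ≤ exp (-ε * ‖x‖) * (exp ε * exp (ε * ‖x‖) * (d + 1).factorial) := by gcongr
    _ = (exp (-ε * ‖x‖) * exp (ε * ‖x‖)) * ((d + 1).factorial * exp ε) := by ring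
    _ = _ := by rw [← exp_add]; simp

end ExpDecay

/-! ### The divergence identity -/

/-- Integration by parts against the constant function `1`. -/
lemma integral_lineDeriv_eq_zero {d : ℕ} {f f' : EuclideanSpace ℝ (Fin d) → ℝ}
    {v : EuclideanSpace ℝ (Fin d)} (hf : Integrable f) (hf' : Integrable f')
    (h : ∀ x, HasLineDerivAt ℝ f (f' x) x v) : ∫ x, f' x = 0 := by
  have := integral_bilinear_hasLineDerivAt_right_eq_neg_left_of_integrable
    (μ := (volume : Measure (EuclideanSpace ℝ (Fin d))))
    (B := ContinuousLinearMap.mul ℝ ℝ) (f := fun _ => (1 : ℝ)) (f' := fun _ => 0)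
    (g := f) (g' := f') (v := v) (by simp) (by simpa using hf') (by simpa using hf)
    (fun x _ => by
      simpa [HasLineDerivAt] using hasDerivAt_const (0 : ℝ) (1 : ℝ)) (fun x _ => h x)
  simpa using this

/-- The diagonal derivative `∂ᵢWᵢ` of the field
`W = (x · q) q - (|q|²/2 + Q²/2 - |Q|^{p+1}/(p+1)) x + (d/2) Q q`, where `q j = ∂ⱼQ` and
`r j k = ∂ₖ(q j)`. -/
lemma hasLineDerivAt_field {d : ℕ} {p : ℝ} (hp : 0 < p) {Q : EuclideanSpace ℝ (Fin d) → ℝ}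
    {q : Fin d → EuclideanSpace ℝ (Fin d) → ℝ} {r : Fin d → Fin d → EuclideanSpace ℝ (Fin d) → ℝ}
    (i : Fin d) (x : EuclideanSpace ℝ (Fin d))
    (hQ : HasLineDerivAt ℝ Q (q i x) x (EuclideanSpace.single i 1))
    (hq : ∀ j, HasLineDerivAt ℝ (q j) (r j i x) x (EuclideanSpace.single i 1)) :
    HasLineDerivAt ℝ
      (fun y => (∑ j, y j * q j y) * q i y
        - y i * ((1 / 2) * (∑ j, q j y * q j y) + (1 / 2) * (Q y * Q y)
            - (1 / (p + 1)) * |Q y| ^ (p + 1))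
        + (d / 2 : ℝ) * (Q y * q i y))
      ((q i x + ∑ j, x j * r j i x) * q i x + (∑ j, x j * q j x) * r i i x
        - (((1 / 2) * (∑ j, q j x * q j x) + (1 / 2) * (Q x * Q x)
            - (1 / (p + 1)) * |Q x| ^ (p + 1))
          + x i * ((∑ j, q j x * r j i x) + Q x * q i x - |Q x| ^ (p - 1) * Q x * q i x))
        + (d / 2 : ℝ) * (q i x * q i x + Q x * r i i x))
      x (EuclideanSpace.single i 1) := by
  have hx : ∀ j, HasDerivAt (fun t : ℝ => (x + t • EuclideanSpace.single i (1 : ℝ)) j)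
      (if j = i then 1 else 0) 0 := by
    intro j
    by_cases hj : j = i
    · subst hj
      simpa using (hasDerivAt_id (0 : ℝ)).const_add (x j)
    · simpa [hj] using hasDerivAt_const (0 : ℝ) (x j)
  unfold HasLineDerivAt at hQ hq ⊢
  have hP : HasDerivAt (fun t : ℝ => |Q (x + t • EuclideanSpace.single i (1 : ℝ))| ^ (p + 1))
      ((p + 1) * (|Q x| ^ (p - 1) * Q x * q i x)) 0 := by
    have h0 : HasDerivAt (fun s : ℝ => |s| ^ (p + 1))
        ((p + 1) * |Q x| ^ (p - 1) * Q x) (Q (x + (0 : ℝ) • EuclideanSpace.single i (1 : ℝ))) := by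
      have := hasDerivAt_abs_rpow (Q x) (p := p + 1) (by linarith)
      rw [show p + 1 - 2 = p - 1 by ring] at this
      simpa using this
    have h1 := h0.comp (0 : ℝ) hQ
    rw [show (p + 1) * |Q x| ^ (p - 1) * Q x * q i x
      = (p + 1) * (|Q x| ^ (p - 1) * Q x * q i x) by ring] at h1
    exact h1
  have hsum1 := HasDerivAt.fun_sum (u := Finset.univ) fun j _ => (hx j).mul (hq j)
  have hsum2 := HasDerivAt.fun_sum (u := Finset.univ) fun j _ => (hq j).mul (hq j)
  have hmain := ((hsum1.mul (hq i)).sub ((hx i).mul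
    (((hsum2.const_mul (1 / 2)).add ((hQ.mul hQ).const_mul (1 / 2))).sub
      (hP.const_mul (1 / (p + 1)))))).add ((hQ.mul (hq i)).const_mul (d / 2 : ℝ))
  have hp1 : p + 1 ≠ 0 := by positivity
  convert! hmain using 1
  simp only [zero_smul, add_zero, Pi.mul_apply, Finset.sum_add_distrib, ite_mul, one_mul,
    zero_mul, Finset.sum_ite_eq', Finset.mem_univ, if_true, Pi.sub_apply, Pi.add_apply]
  have e1 : ∑ j, r j i x * q j x = ∑ j, q j x * r j i x :=
    Finset.sum_congr rfl fun j _ => mul_comm _ _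
  rw [e1]
  field_simp
  ring

/-- The identity `div W = |q|² - (2/(p+1)) |Q|^{p+1}` at a point, with `u = Q x`, `P = |Q x|^{p+1}`,
`N = |Q x|^{p-1} Q x`; the hypotheses are the symmetry of the Hessian, the equation and the
critical exponent. -/
lemma sum_field_deriv {d : ℕ} (hd : 1 ≤ d) {p : ℝ} (hpd : p = 1 + 4 / (d : ℝ))
    (x q : Fin d → ℝ) (r : Fin d → Fin d → ℝ) (u N P : ℝ) (hr : ∀ i j, r i j = r j i)
    (hNP : N * u = P) (heq : (∑ i, r i i) - u + N = 0) :
    ∑ i, ((q i + ∑ j, x j * r j i) * q i + (∑ j, x j * q j) * r i i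
        - (((1 / 2) * (∑ j, q j * q j) + (1 / 2) * (u * u) - (1 / (p + 1)) * P)
          + x i * ((∑ j, q j * r j i) + u * q i - N * q i))
        + (d / 2 : ℝ) * (q i * q i + u * r i i))
      = (∑ i, q i * q i) - 2 * ((1 / (p + 1)) * P) := by
  have hd0 : (0 : ℝ) < d := by exact_mod_cast hd
  have hsw : ∑ i, (∑ j, x j * r j i) * q i = ∑ i, x i * ∑ j, q j * r j i := by
    simp_rw [Finset.sum_mul, Finset.mul_sum]
    rw [Finset.sum_comm]
    refine Finset.sum_congr rfl fun i _ => Finset.sum_congr rfl fun j _ => ?_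
    rw [hr i j]; ring
  have hxu : ∑ i, x i * (u * q i) = u * ∑ i, x i * q i := by
    rw [Finset.mul_sum]; exact Finset.sum_congr rfl fun i _ => by ring
  have hxN : ∑ i, x i * (N * q i) = N * ∑ i, x i * q i := by
    rw [Finset.mul_sum]; exact Finset.sum_congr rfl fun i _ => by ring
  simp only [Finset.sum_add_distrib, Finset.sum_sub_distrib, add_mul, mul_add, mul_sub,
    ← Finset.mul_sum, hsw, hxu, hxN, Finset.sum_const, Finset.card_univ, Fintype.card_fin,
    nsmul_eq_mul]
  have hL : ∑ i, r i i = u - N := by linarith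
  have hp1 : p + 1 ≠ 0 := by rw [hpd]; positivity
  have hdp : (d : ℝ) * (p - 1) = 4 := by rw [hpd]; field_simp; ring
  rw [hL, ← hNP]
  field_simp
  linear_combination (-(N * u)) * hdp

/-- Vanishing of the energy of the ground state in the `L²`-critical case
`p = 1 + 4/d`: `E(Q) = (1/2)∫|∇Q|² - (1/(p+1))∫|Q|^{p+1} = 0`. -/
theorem ground_state_energy_zero_critical
    (d : ℕ) (hd : 1 ≤ d) (p : ℝ) (hpd : p = 1 + 4 / (d : ℝ))
    (Q : EuclideanSpace ℝ (Fin d) → ℝ) (hQ : ContDiff ℝ 2 Q)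
    (hQeq : ∀ x : EuclideanSpace ℝ (Fin d),
      (∑ i : Fin d, fderiv ℝ (fun y => fderiv ℝ Q y (EuclideanSpace.single i (1 : ℝ))) x
          (EuclideanSpace.single i (1 : ℝ)))
        - Q x + |Q x| ^ (p - 1) * Q x = 0)
    (C δ : ℝ) (hC : 0 < C) (hδ : 0 < δ)
    (hdecay : ∀ x, |Q x| + ‖gradient Q x‖ + ‖iteratedFDeriv ℝ 2 Q x‖
      ≤ C * Real.exp (-δ * ‖x‖)) :
    (1 / 2) * (∫ x, ‖gradient Q x‖ ^ 2) - (1 / (p + 1)) * (∫ x, |Q x| ^ (p + 1)) = 0 := by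
  have hd0 : (0 : ℝ) < d := by exact_mod_cast hd
  have hp : 1 < p := by rw [hpd]; linarith [show (0 : ℝ) < 4 / d by positivity]
  let e : Fin d → EuclideanSpace ℝ (Fin d) := fun i => EuclideanSpace.single i 1
  let q : Fin d → EuclideanSpace ℝ (Fin d) → ℝ := fun i y => fderiv ℝ Q y (e i)
  let r : Fin d → Fin d → EuclideanSpace ℝ (Fin d) → ℝ := fun i j x => fderiv ℝ (q i) x (e j)
  have he : ∀ i, ‖e i‖ = 1 := fun i => by simp [e]
  have hDQ : ContDiff ℝ 1 (fderiv ℝ Q) := hQ.fderiv_right (by norm_num)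
  have hq1 : ∀ i, ContDiff ℝ 1 (q i) := fun i => hDQ.clm_apply contDiff_const
  have hr2 : ∀ i j x, r i j x = fderiv ℝ (fderiv ℝ Q) x (e j) (e i) := by
    intro i j x
    have h := ((hDQ.differentiable one_ne_zero x).hasFDerivAt.clm_apply
      (hasFDerivAt_const (e i) x)).fderiv
    change fderiv ℝ (fun y => fderiv ℝ Q y (e i)) x (e j) = _
    rw [h]
    simp
  have hsymm : ∀ x i j, r i j x = r j i x := by
    intro x i j
    rw [hr2, hr2]
    exact (hQ.contDiffAt (x := x)).isSymmSndFDerivAt (by simp) (e j) (e i)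
  have hgrad : ∀ i x, q i x = (gradient Q x) i := by
    intro i x
    have h : inner ℝ (gradient Q x) (e i) = fderiv ℝ Q x (e i) := inner_gradient_left
    change fderiv ℝ Q x (e i) = _
    rw [← h]
    exact (EuclideanSpace.inner_single_right i 1 _).trans (by simp)
  have hgradsq : ∀ x, ‖gradient Q x‖ ^ 2 = ∑ i, q i x * q i x := by
    intro x
    rw [EuclideanSpace.norm_sq_eq]
    exact Finset.sum_congr rfl fun i _ => by rw [hgrad, norm_eq_abs, sq_abs, sq]
  have dQ : ExpDecay Q := ⟨hQ.continuous, C, δ, hC.le, hδ, fun x => by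
    linarith [hdecay x, norm_nonneg (gradient Q x), norm_nonneg (iteratedFDeriv ℝ 2 Q x)]⟩
  have dq : ∀ i, ExpDecay (q i) := fun i => ⟨(hq1 i).continuous, C, δ, hC.le, hδ, fun x => by
    have h1 : |q i x| ≤ ‖gradient Q x‖ := by
      rw [hgrad]; simpa using PiLp.norm_apply_le (gradient Q x) i
    linarith [hdecay x, abs_nonneg (Q x), norm_nonneg (iteratedFDeriv ℝ 2 Q x)]⟩
  have dr : ∀ i j, ExpDecay (r i j) := fun i j =>
    ⟨((hq1 i).continuous_fderiv one_ne_zero).clm_apply continuous_const, C, δ, hC.le, hδ,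
      fun x => by
        have h1 : |r i j x| ≤ ‖iteratedFDeriv ℝ 2 Q x‖ := by
          have h2 := (iteratedFDeriv ℝ 2 Q x).le_opNorm ![e j, e i]
          rw [iteratedFDeriv_two_apply] at h2
          rw [hr2]
          simpa [Fin.prod_univ_two, he] using h2
        linarith [hdecay x, abs_nonneg (Q x), norm_nonneg (gradient Q x)]⟩
  have dP : ExpDecay (fun x => |Q x| ^ (p + 1)) := dQ.abs_rpow (by linarith)
  have dN : ExpDecay (fun x => |Q x| ^ (p - 1) * Q x) :=
    (dQ.abs_rpow (s := p - 1) (by linarith)).mul dQ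
  have dS : ExpDecay (fun x => ∑ j, q j x * q j x) := .sum _ fun j => (dq j).mul (dq j)
  have dX : ExpDecay (fun x => ∑ j, x j * q j x) := .sum _ fun j => (dq j).coord_mul j
  have dH : ExpDecay (fun x => (1 / 2) * (∑ j, q j x * q j x) + (1 / 2) * (Q x * Q x)
      - (1 / (p + 1)) * |Q x| ^ (p + 1)) :=
    ((dS.const_mul _).add ((dQ.mul dQ).const_mul _)).sub (dP.const_mul _)
  have dW := fun i => ((dX.mul (dq i)).sub (dH.coord_mul i)).add
    ((dQ.mul (dq i)).const_mul (d / 2 : ℝ))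
  have dW' := fun i : Fin d =>
    (((((dq i).add (.sum Finset.univ fun j => (dr j i).coord_mul j)).mul (dq i)).add
      (dX.mul (dr i i))).sub
      (dH.add ((((ExpDecay.sum Finset.univ fun j => (dq j).mul (dr j i)).add
        (dQ.mul (dq i))).sub (dN.mul (dq i))).coord_mul i))).add
      ((((dq i).mul (dq i)).add (dQ.mul (dr i i))).const_mul (d / 2 : ℝ))
  have hzero := fun i => integral_lineDeriv_eq_zero (dW i).integrable (dW' i).integrable
    fun x => hasLineDerivAt_field (by linarith) i x
      ((hQ.differentiable two_ne_zero x).hasFDerivAt.hasLineDerivAt (e i))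
      (fun j => ((hq1 j).differentiable one_ne_zero x).hasFDerivAt.hasLineDerivAt (e i))
  have hsum := integral_finsetSum Finset.univ fun i _ => (dW' i).integrable
  rw [Finset.sum_eq_zero fun i _ => hzero i] at hsum
  have hdiv : ∫ x, ((∑ i, q i x * q i x) - 2 * ((1 / (p + 1)) * |Q x| ^ (p + 1))) = 0 := by
    rw [← hsum]
    congr 1
    funext x
    refine (sum_field_deriv hd hpd (fun i => x i) (fun i => q i x) (fun i j => r i j x) (Q x)
      (|Q x| ^ (p - 1) * Q x) (|Q x| ^ (p + 1)) (hsymm x) ?_ (hQeq x)).symm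
    rw [mul_assoc, ← abs_mul_abs_self (Q x), show p + 1 = (p - 1) + (2 : ℕ) by push_cast; ring,
      rpow_add_natCast' (abs_nonneg _) (by push_cast; linarith), sq]
  rw [integral_sub dS.integrable ((dP.const_mul _).const_mul _).integrable,
    integral_const_mul, integral_const_mul] at hdiv
  simp_rw [hgradsq]
  linarith
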